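/- arXiv:2407.05114 — 6 statements merged into one kernel-verified Lean document; each statement's English description precedes it below -/
import Mathlib

section
/- Let μ > 0, let c > 0, and let π = p_1 p_2 … p_k be a c-packed polygonal curve in ℝ^d. Then the greedy μ-simplification simpl(π,μ) is a 6c-packed polygonal curve. -/
open scoped BigOperators

noncomputable section

/-- Points of `d`-dimensional Euclidean space. -/
abbrev Pt (d : ℕ) := EuclideanSpace ℝ (Fin d)

/-- A reparametrization: a continuous nondecreasing surjection of `[0,1]` onto itself
(equivalently, continuous and monotone on `[0,1]` with `α 0 = 0` and `α 1 = 1`). -/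
structure IsReparam (α : ℝ → ℝ) : Prop where
  continuousOn : ContinuousOn α (Set.Icc 0 1)
  monotoneOn : MonotoneOn α (Set.Icc 0 1)
  map_zero : α 0 = 0
  map_one : α 1 = 1

/-- The Fréchet distance between two curves parametrized over `[0,1]`. -/
noncomputable def frechetDist {d : ℕ} (P Q : ℝ → Pt d) : ℝ :=
  sInf {r : ℝ | ∃ α β : ℝ → ℝ, IsReparam α ∧ IsReparam β ∧
    r = ⨆ t : Set.Icc (0:ℝ) 1, dist (P (α (t : ℝ))) (Q (β (t : ℝ)))}

/-- The straight-line curve from `a` to `b`, parametrized over `[0,1]`. -/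
def seg {d : ℕ} (a b : Pt d) : ℝ → Pt d := fun t => (1 - t) • a + t • b

/-- The subcurve `K|[s,t]`, reparametrized over `[0,1]`. -/
def subcurve {d : ℕ} (K : ℝ → Pt d) (s t : ℝ) : ℝ → Pt d := fun u => K (s + u * (t - s))

/-- `K` is affine-linear on `[a,b]` (constant if `a = b`, by `div_zero`). -/
def AffineOn {d : ℕ} (K : ℝ → Pt d) (a b : ℝ) : Prop :=
  ∀ x ∈ Set.Icc a b, K x = K a + ((x - a) / (b - a)) • (K b - K a)

/-- Concatenation of two curves parametrized over `[0,1]`. -/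
noncomputable def concat {d : ℕ} (A B : ℝ → Pt d) : ℝ → Pt d :=
  fun t => if t ≤ 1 / 2 then A (2 * t) else B (2 * t - 1)

/-- The point at parameter `t ∈ [0,1]` on the segment with endpoints `e.1`, `e.2`. -/
def interpEdge {d : ℕ} (e : Pt d × Pt d) (t : ℝ) : Pt d := (1 - t) • e.1 + t • e.2

/-- The edges of a polygonal curve given by its list of vertices. -/
def edgesOf {d : ℕ} (l : List (Pt d)) : List (Pt d × Pt d) := l.zip l.tail

/-- The length of the part of segment `e` inside the closed ball `B(q,r)`. -/
noncomputable def segBallLength {d : ℕ} (e : Pt d × Pt d) (q : Pt d) (r : ℝ) : ℝ :=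
  (MeasureTheory.volume
      {t : ℝ | t ∈ Set.Icc (0:ℝ) 1 ∧ interpEdge e t ∈ Metric.closedBall q r}).toReal
    * dist e.1 e.2

/-- A polygonal curve with vertex list `l` is `c`-packed: for every point `q` and radius
`r > 0`, the total length of the curve inside `B(q,r)` is at most `c * r`. -/
def CPacked {d : ℕ} (c : ℝ) (l : List (Pt d)) : Prop :=
  ∀ (q : Pt d) (r : ℝ), 0 < r →
    ((edgesOf l).map (fun e => segBallLength e q r)).sum ≤ c * r

/-- Greedy scan step of the simplification: starting from the current vertex `cur`, mark
the first vertex at distance at least `μ` from `cur` and continue from it. -/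
noncomputable def greedyScan {d : ℕ} (μ : ℝ) : Pt d → List (Pt d) → List (Pt d)
  | _, [] => []
  | cur, p :: rest =>
      if μ ≤ dist cur p then p :: greedyScan μ p rest else greedyScan μ cur rest

open Classical in
/-- The greedy `μ`-simplification of a polygonal curve given by its vertex list: mark the
first vertex, greedily scan forward, and always mark the last vertex. -/
noncomputable def simplList {d : ℕ} (μ : ℝ) : List (Pt d) → List (Pt d)
  | [] => []
  | p :: rest =>
      let s := p :: greedyScan μ p rest
      match rest.getLast? with
      | none => s
      | some last => if s.getLast? = some last then s else s ++ [last]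

/-- `P : [0,1] → ℝ^d` is the polygonal curve through the vertex list `l`, with the uniform
parametrization placing vertex `i` at parameter `i / (|l| - 1)`. -/
def IsPolygonalParamL {d : ℕ} (l : List (Pt d)) (P : ℝ → Pt d) : Prop :=
  (∀ i, i < l.length → P ((i : ℝ) / ((l.length : ℝ) - 1)) = l.getD i 0) ∧
  ∀ i, i + 1 < l.length →
    AffineOn P ((i : ℝ) / ((l.length : ℝ) - 1)) (((i : ℝ) + 1) / ((l.length : ℝ) - 1))

/-- `Q : [0,1] → ℝ^d` is the polygonal curve with vertices `q 0, …, q (m-1)`, with the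
uniform parametrization placing vertex `i` at parameter `i / (m - 1)`. -/
def IsPolygonalParam {d : ℕ} (m : ℕ) (q : ℕ → Pt d) (Q : ℝ → Pt d) : Prop :=
  (∀ i, i < m → Q ((i : ℝ) / ((m : ℝ) - 1)) = q i) ∧
  ∀ i, i + 1 < m →
    AffineOn Q ((i : ℝ) / ((m : ℝ) - 1)) (((i : ℝ) + 1) / ((m : ℝ) - 1))

/-- The Euclidean distance from a point `x` to the segment `e`. -/
noncomputable def segDist {d : ℕ} (e : Pt d × Pt d) (x : Pt d) : ℝ :=
  sInf {r : ℝ | ∃ t ∈ Set.Icc (0:ℝ) 1, r = dist x (interpEdge e t)}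

/-- The trough object of an edge `e`, a subset of `ℝ^d × ℝ`. -/
def trough {d : ℕ} (e : Pt d × Pt d) (δ : ℝ) : Set (Pt d × ℝ) :=
  {p | segDist e p.1 ≤ 4 * p.2 ∧ 4 * p.2 ≤ 8 * δ⁻¹ * dist e.1 e.2}

/-- The axis-parallel hypercube in `ℝ^d × ℝ` with lower corner `(a, b)` and side length `s`. -/
def cube {d : ℕ} (a : Pt d) (b s : ℝ) : Set (Pt d × ℝ) :=
  {p | (∀ i, p.1 i ∈ Set.Icc (a i) (a i + s)) ∧ p.2 ∈ Set.Icc b (b + s)}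

end

/-!
Inside any ball the length of a segment is the one-dimensional Hausdorff measure of its trace, so
`1`-Lipschitz maps do not increase it. A shortcut edge `ab` replaces a stretch of `π` staying within
`μ` of the line `ab`; projecting that stretch orthogonally onto the line covers `ab` and moves
points by at most `μ`, hence the length of the simplification in `B(q, r)` is at most the length of
`π` in `B(q, r + μ)`. If `μ ≤ 2r` this is at most `c(r + μ) ≤ 3cr`. If `2r < μ`, every edge but the
last has length at least `μ`, so one meeting `B(q, r)` contributes at most `2r` there and at least
`μ` in `B(q, r + μ)`; these edges contribute at most `(2r / μ) c (r + 2μ) ≤ 5cr`, and the last one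
at most `2r ≤ cr`, because a `c`-packed curve of positive length has `c ≥ 2`.
-/

open MeasureTheory Metric AffineMap EuclideanGeometry

theorem exists_subsegment_of_mem_segment {E : Type*} [SeminormedAddCommGroup E] [NormedSpace ℝ E]
    {a b x : E} {m : ℝ} (hx : x ∈ segment ℝ a b) (hm₀ : 0 ≤ m) (hm : m ≤ dist a b) :
    ∃ u ∈ segment ℝ a b, ∃ v ∈ segment ℝ a b, x ∈ segment ℝ u v ∧ dist u v = m := by
  rw [segment_eq_image_lineMap] at hx ⊢
  obtain ⟨s, ⟨hs₀, hs₁⟩, rfl⟩ := hx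
  set δ := m / dist a b
  have hδ₀ : 0 ≤ δ := by positivity
  have hδ₁ : δ ≤ 1 := div_le_one_of_le₀ hm dist_nonneg
  set t := min s (1 - δ)
  have ht₀ : 0 ≤ t := le_min hs₀ (by linarith)
  have hts : t ≤ s := min_le_left _ _
  have htδ : t ≤ 1 - δ := min_le_right _ _
  have hst : s ≤ t + δ := by
    rw [min_add]
    exact le_min (by linarith) (by linarith)
  refine ⟨_, ⟨t, ⟨ht₀, by linarith⟩, rfl⟩, _, ⟨t + δ, ⟨by linarith, by linarith⟩, rfl⟩, ?_, ?_⟩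
  · rw [← image_segment, segment_eq_Icc (by linarith)]
    exact ⟨s, ⟨hts, hst⟩, rfl⟩
  · rw [dist_lineMap_lineMap, Real.dist_eq, sub_add_cancel_left, abs_neg, abs_of_nonneg hδ₀]
    exact div_mul_cancel_of_imp fun h => le_antisymm (h ▸ hm) hm₀

theorem hausdorffMeasure_lineMap_image_le_ediam {E : Type*} [NormedAddCommGroup E]
    [NormedSpace ℝ E] [MeasurableSpace E] [BorelSpace E] (a b : E) (T : Set ℝ) :
    μH[1] (lineMap a b '' T) ≤ ediam (lineMap a b '' T) := by
  rw [hausdorffMeasure_lineMap_image, hausdorffMeasure_real]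
  rcases eq_or_ne a b with rfl | hab
  · simp
  have hanti : AntilipschitzWith (nndist a b)⁻¹ (lineMap a b : ℝ → E) :=
    AntilipschitzWith.of_le_mul_dist fun s t => by
      rw [dist_lineMap_lineMap, mul_comm, NNReal.coe_inv, coe_nndist,
        mul_inv_cancel_right₀ (dist_ne_zero.2 hab)]
  have hne : nndist a b ≠ 0 := mt nndist_eq_zero.1 hab
  calc nndist a b • volume T ≤ nndist a b • ((nndist a b)⁻¹ * ediam (lineMap a b '' T)) := by
        gcongr
        exact (Real.volume_le_diam T).trans (hanti.le_mul_ediam_image T)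
    _ = ediam (lineMap a b '' T) := by
        rw [ENNReal.smul_def, smul_eq_mul, ← mul_assoc, ← ENNReal.coe_mul, mul_inv_cancel₀ hne,
          ENNReal.coe_one, one_mul]

section Projection

variable {V P : Type*} [NormedAddCommGroup V] [InnerProductSpace ℝ V] [MetricSpace P]
  [NormedAddTorsor V P]

theorem lipschitzWith_orthogonalProjection (s : AffineSubspace ℝ P) [Nonempty s]
    [s.direction.HasOrthogonalProjection] :
    LipschitzWith 1 fun p => (orthogonalProjection s p : P) := by
  refine LipschitzWith.of_dist_le_mul fun p q => ?_
  rw [dist_eq_norm_vsub V, dist_eq_norm_vsub V, NNReal.coe_one, one_mul,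
    ← AffineSubspace.coe_vsub, ← ContinuousAffineMap.contLinear_map_vsub]
  exact Submodule.norm_orthogonalProjectionOnto_apply_le _ _

theorem orthogonalProjection_line_eq {a b x z : V} (hx : x ∈ line[ℝ, a, b])
    (hz : inner ℝ (b - a) z = inner ℝ (b - a) x) :
    (orthogonalProjection line[ℝ, a, b] z : V) = x := by
  refine coe_orthogonalProjection_eq_iff_mem.2 ⟨hx, ?_⟩
  rw [direction_affineSpan, vectorSpan_pair_rev, vsub_eq_sub, vsub_eq_sub,
    Submodule.mem_orthogonal_singleton_iff_inner_right, inner_sub_right, hz, sub_self]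

theorem dist_orthogonalProjection_le_of_mem_cthickening {s : AffineSubspace ℝ P} [Nonempty s]
    [s.direction.HasOrthogonalProjection] {p : P} {δ : ℝ} (hδ : 0 ≤ δ)
    (hp : p ∈ cthickening δ (s : Set P)) : dist p (orthogonalProjection s p) ≤ δ := by
  rw [dist_orthogonalProjection_eq_infDist]
  exact ENNReal.toReal_le_of_le_ofReal hδ hp

end Projection

section Edge

variable {d : ℕ}

theorem interpEdge_eq_lineMap (e : Pt d × Pt d) : interpEdge e = lineMap e.1 e.2 :=
  funext fun t => (lineMap_apply_module e.1 e.2 t).symm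

theorem ofReal_segBallLength (e : Pt d × Pt d) (q : Pt d) (r : ℝ) :
    ENNReal.ofReal (segBallLength e q r) = μH[1] (segment ℝ e.1 e.2 ∩ closedBall q r) := by
  have htrace : segment ℝ e.1 e.2 ∩ closedBall q r =
      lineMap e.1 e.2 '' {t : ℝ | t ∈ Set.Icc 0 1 ∧ interpEdge e t ∈ closedBall q r} := by
    rw [segment_eq_image_lineMap, interpEdge_eq_lineMap, ← Set.image_inter_preimage]
    rfl
  have hfin : volume {t : ℝ | t ∈ Set.Icc 0 1 ∧ interpEdge e t ∈ closedBall q r} ≠ ⊤ :=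
    measure_ne_top_of_subset (fun _ ht => ht.1) measure_Icc_lt_top.ne
  rw [htrace, hausdorffMeasure_lineMap_image, hausdorffMeasure_real, segBallLength,
    ENNReal.ofReal_mul ENNReal.toReal_nonneg, ENNReal.ofReal_toReal hfin, mul_comm,
    ← edist_dist, edist_nndist]
  rfl

theorem segBallLength_nonneg (e : Pt d × Pt d) (q : Pt d) (r : ℝ) : 0 ≤ segBallLength e q r :=
  mul_nonneg ENNReal.toReal_nonneg dist_nonneg

theorem segBallLength_le_of_segment_subset {e e' : Pt d × Pt d}
    (h : segment ℝ e.1 e.2 ⊆ segment ℝ e'.1 e'.2) (q : Pt d) (r : ℝ) :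
    segBallLength e q r ≤ segBallLength e' q r := by
  rw [← ENNReal.ofReal_le_ofReal_iff (segBallLength_nonneg e' q r), ofReal_segBallLength,
    ofReal_segBallLength]
  exact measure_mono (Set.inter_subset_inter_left _ h)

theorem segBallLength_le_dist (e : Pt d × Pt d) (q : Pt d) (r : ℝ) :
    segBallLength e q r ≤ dist e.1 e.2 := by
  rw [← ENNReal.ofReal_le_ofReal_iff dist_nonneg, ofReal_segBallLength, ← edist_dist,
    ← hausdorffMeasure_segment]
  exact measure_mono Set.inter_subset_left

theorem segBallLength_eq_dist {e : Pt d × Pt d} {q : Pt d} {r : ℝ}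
    (h₁ : e.1 ∈ closedBall q r) (h₂ : e.2 ∈ closedBall q r) :
    segBallLength e q r = dist e.1 e.2 := by
  rw [← ENNReal.ofReal_eq_ofReal_iff (segBallLength_nonneg e q r) dist_nonneg,
    ofReal_segBallLength,
    Set.inter_eq_left.2 ((convex_closedBall q r).segment_subset h₁ h₂),
    hausdorffMeasure_segment, edist_dist]

theorem segBallLength_le_two_mul (e : Pt d × Pt d) (q : Pt d) {r : ℝ} (hr : 0 ≤ r) :
    segBallLength e q r ≤ 2 * r := by
  obtain ⟨T, -, hT⟩ : ∃ T ⊆ Set.Icc (0 : ℝ) 1,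
      lineMap e.1 e.2 '' T = segment ℝ e.1 e.2 ∩ closedBall q r := by
    rw [← Set.subset_image_iff, ← segment_eq_image_lineMap]
    exact Set.inter_subset_left
  have h2r : (0 : ℝ) ≤ 2 * r := by positivity
  rw [← ENNReal.ofReal_le_ofReal_iff h2r, ofReal_segBallLength]
  calc μH[1] (segment ℝ e.1 e.2 ∩ closedBall q r)
      ≤ ediam (segment ℝ e.1 e.2 ∩ closedBall q r) :=
        hT ▸ hausdorffMeasure_lineMap_image_le_ediam e.1 e.2 T
    _ ≤ ediam (closedEBall q (ENNReal.ofReal r)) := by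
        rw [closedEBall_ofReal hr]
        exact ediam_mono Set.inter_subset_right
    _ ≤ 2 * ENNReal.ofReal r := ediam_closedEBall_le
    _ = ENNReal.ofReal (2 * r) := by rw [ENNReal.ofReal_mul zero_le_two, ENNReal.ofReal_ofNat]

theorem segBallLength_eq_zero {e : Pt d × Pt d} {q : Pt d} {r : ℝ}
    (h : Disjoint (segment ℝ e.1 e.2) (closedBall q r)) : segBallLength e q r = 0 := by
  rw [← (segBallLength_nonneg e q r).ge_iff_eq', ← ENNReal.ofReal_eq_zero, ofReal_segBallLength,
    h.inter_eq, measure_empty]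

theorem le_segBallLength_add {e : Pt d × Pt d} {q : Pt d} {r m : ℝ}
    (hm₀ : 0 ≤ m) (hm : m ≤ dist e.1 e.2)
    (hmeet : ¬ Disjoint (segment ℝ e.1 e.2) (closedBall q r)) :
    m ≤ segBallLength e q (r + m) := by
  obtain ⟨x, hxe, hxq⟩ := Set.not_disjoint_iff.1 hmeet
  obtain ⟨u, hu, v, hv, hx, rfl⟩ := exists_subsegment_of_mem_segment hxe hm₀ hm
  have hsplit := dist_add_dist_of_mem_segment hx
  rw [mem_closedBall] at hxq
  have huq : u ∈ closedBall q (r + dist u v) := by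
    rw [mem_closedBall]
    linarith [dist_triangle u x q, dist_nonneg (x := x) (y := v)]
  have hvq : v ∈ closedBall q (r + dist u v) := by
    rw [mem_closedBall]
    linarith [dist_triangle_left v q x, dist_nonneg (x := u) (y := x)]
  calc dist u v = segBallLength (u, v) q (r + dist u v) :=
        (segBallLength_eq_dist (e := (u, v)) huq hvq).symm
    _ ≤ segBallLength e q (r + dist u v) :=
        segBallLength_le_of_segment_subset (e := (u, v))
          ((convex_segment e.1 e.2).segment_subset hu hv) _ _

theorem mul_segBallLength_le {e : Pt d × Pt d} {m : ℝ} (hm₀ : 0 ≤ m) (hm : m ≤ dist e.1 e.2)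
    (q : Pt d) {r : ℝ} (hr : 0 ≤ r) :
    m * segBallLength e q r ≤ 2 * r * segBallLength e q (r + m) := by
  by_cases hmeet : Disjoint (segment ℝ e.1 e.2) (closedBall q r)
  · rw [segBallLength_eq_zero hmeet, mul_zero]
    have := segBallLength_nonneg e q (r + m)
    positivity
  · rw [mul_comm]
    exact mul_le_mul (segBallLength_le_two_mul e q hr) (le_segBallLength_add hm₀ hm hmeet) hm₀
      (by positivity)

end Edge

section Curve

variable {d : ℕ}

theorem edgesOf_singleton (x : Pt d) : edgesOf [x] = [] := rfl

theorem edgesOf_cons_cons (x y : Pt d) (l : List (Pt d)) :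
    edgesOf (x :: y :: l) = (x, y) :: edgesOf (y :: l) := rfl

theorem edgesOf_append_cons (l₁ : List (Pt d)) (p : Pt d) (l₂ : List (Pt d)) :
    edgesOf (l₁ ++ p :: l₂) = edgesOf (l₁ ++ [p]) ++ edgesOf (p :: l₂) := by
  induction l₁ with
  | nil => rfl
  | cons x l ih =>
    cases l with
    | nil => rfl
    | cons y l =>
      simp only [List.cons_append, edgesOf_cons_cons] at ih ⊢
      rw [ih]

theorem exists_edge_mem_segment_map_eq (f : Pt d →ᵃ[ℝ] ℝ) {a b : Pt d} {m : List (Pt d)} {s : ℝ}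
    (hs : s ∈ Set.uIcc (f a) (f b)) :
    ∃ e ∈ edgesOf (a :: (m ++ [b])), ∃ z ∈ segment ℝ e.1 e.2, f z = s := by
  have hit_segment {x y : Pt d} (h : s ∈ Set.uIcc (f x) (f y)) : ∃ z ∈ segment ℝ x y, f z = s := by
    rwa [← segment_eq_uIcc, ← image_segment] at h
  induction m generalizing a with
  | nil => exact ⟨(a, b), List.mem_singleton_self _, hit_segment hs⟩
  | cons y m ih =>
    rcases Set.uIcc_subset_uIcc_union_uIcc (b := f y) hs with h | h
    · exact ⟨(a, y), List.mem_cons_self, hit_segment h⟩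
    · obtain ⟨e, he, hz⟩ := ih h
      exact ⟨e, List.mem_cons_of_mem _ he, hz⟩

theorem segment_subset_of_mem_edgesOf {C : Set (Pt d)} (hC : Convex ℝ C) {l : List (Pt d)}
    (hl : ∀ p ∈ l, p ∈ C) {e : Pt d × Pt d} (he : e ∈ edgesOf l) : segment ℝ e.1 e.2 ⊆ C :=
  have hmem := List.of_mem_zip he
  hC.segment_subset (hl _ hmem.1) (hl _ (List.mem_of_mem_tail hmem.2))

/-- The length of the part of the polygonal curve with vertex list `l` inside the closed ball
`B(q,r)`; `CPacked c l` says that it is at most `c * r`. -/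
noncomputable def lengthInBall (l : List (Pt d)) (q : Pt d) (r : ℝ) : ℝ :=
  ((edgesOf l).map fun e => segBallLength e q r).sum

theorem lengthInBall_pair (x y q : Pt d) (r : ℝ) :
    lengthInBall [x, y] q r = segBallLength (x, y) q r := add_zero _

theorem lengthInBall_append_cons (l₁ : List (Pt d)) (p : Pt d) (l₂ : List (Pt d)) (q : Pt d)
    (r : ℝ) :
    lengthInBall (l₁ ++ p :: l₂) q r =
      lengthInBall (l₁ ++ [p]) q r + lengthInBall (p :: l₂) q r := by
  simp only [lengthInBall, edgesOf_append_cons l₁ p l₂, List.map_append, List.sum_append]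

theorem lengthInBall_cons_cons (x y : Pt d) (l : List (Pt d)) (q : Pt d) (r : ℝ) :
    lengthInBall (x :: y :: l) q r = segBallLength (x, y) q r + lengthInBall (y :: l) q r := rfl

theorem lengthInBall_nonneg (l : List (Pt d)) (q : Pt d) (r : ℝ) : 0 ≤ lengthInBall l q r :=
  List.sum_nonneg <| List.forall_mem_map.2 fun e _ => segBallLength_nonneg e q r

theorem lengthInBall_append_singleton {l : List (Pt d)} (hl : l ≠ []) (w q : Pt d) (r : ℝ) :
    lengthInBall (l ++ [w]) q r = lengthInBall l q r + segBallLength (l.getLast hl, w) q r := by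
  conv_lhs => rw [← List.dropLast_append_getLast hl, List.append_assoc, List.singleton_append,
    lengthInBall_append_cons, List.dropLast_append_getLast, lengthInBall_pair]

theorem hausdorffMeasure_biUnion_image_le {X : Type*} [EMetricSpace X] [MeasurableSpace X]
    [BorelSpace X] {f : Pt d → X} (hf : LipschitzWith 1 f)
    (L : List (Pt d × Pt d)) (q : Pt d) (r : ℝ) :
    μH[1] (⋃ e ∈ L, f '' (segment ℝ e.1 e.2 ∩ closedBall q r)) ≤
      ENNReal.ofReal (L.map fun e => segBallLength e q r).sum := by
  induction L with
  | nil => simp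
  | cons e L ih =>
    have hhead : μH[1] (f '' (segment ℝ e.1 e.2 ∩ closedBall q r)) ≤
        ENNReal.ofReal (segBallLength e q r) := by
      simpa [ofReal_segBallLength] using
        hf.hausdorffMeasure_image_le zero_le_one (segment ℝ e.1 e.2 ∩ closedBall q r)
    have htail : 0 ≤ (L.map fun e => segBallLength e q r).sum :=
      List.sum_nonneg <| List.forall_mem_map.2 fun e _ => segBallLength_nonneg e q r
    simp only [List.mem_cons, Set.iUnion_iUnion_eq_or_left, List.map_cons, List.sum_cons]
    rw [ENNReal.ofReal_add (segBallLength_nonneg e q r) htail]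
    exact (measure_union_le _ _).trans (add_le_add hhead ih)

theorem segment_subset_biUnion_image_orthogonalProjection {δ : ℝ} (hδ : 0 ≤ δ) {a b : Pt d}
    {m : List (Pt d)} (hm : ∀ p ∈ m, p ∈ cthickening δ (line[ℝ, a, b] : Set (Pt d)))
    (q : Pt d) (r : ℝ) :
    segment ℝ a b ∩ closedBall q r ⊆ ⋃ e ∈ edgesOf (a :: (m ++ [b])),
      (fun z => (orthogonalProjection line[ℝ, a, b] z : Pt d)) ''
        (segment ℝ e.1 e.2 ∩ closedBall q (r + δ)) := by
  rintro x ⟨hxab, hxq⟩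
  have hxline : x ∈ line[ℝ, a, b] := (mem_segment_iff_wbtw.1 hxab).mem_affineSpan
  set f : Pt d →ᵃ[ℝ] ℝ := (innerₛₗ ℝ (b - a)).toAffineMap
  have hfx : f x ∈ Set.uIcc (f a) (f b) := by
    rw [← segment_eq_uIcc, ← image_segment]
    exact ⟨x, hxab, rfl⟩
  obtain ⟨e, he, z, hze, hfz⟩ := exists_edge_mem_segment_map_eq f (m := m) hfx
  have hzx : (orthogonalProjection line[ℝ, a, b] z : Pt d) = x :=
    orthogonalProjection_line_eq hxline hfz
  have hvertices : ∀ p ∈ a :: (m ++ [b]), p ∈ cthickening δ (line[ℝ, a, b] : Set (Pt d)) := by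
    simp only [List.mem_cons, List.mem_append, List.not_mem_nil, or_false]
    rintro p (rfl | hp | rfl)
    · exact self_subset_cthickening _ (left_mem_affineSpan_pair ℝ _ _)
    · exact hm p hp
    · exact self_subset_cthickening _ (right_mem_affineSpan_pair ℝ _ _)
  have hz : z ∈ cthickening δ (line[ℝ, a, b] : Set (Pt d)) :=
    segment_subset_of_mem_edgesOf ((line[ℝ, a, b]).convex.cthickening δ) hvertices he hze
  have hdist : dist z x ≤ δ := hzx ▸ dist_orthogonalProjection_le_of_mem_cthickening hδ hz
  refine Set.mem_biUnion he ⟨z, ⟨hze, ?_⟩, hzx⟩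
  exact (dist_triangle z x q).trans (by linarith [mem_closedBall.1 hxq])

theorem segBallLength_le_lengthInBall {δ : ℝ} (hδ : 0 ≤ δ) {a b : Pt d} {m : List (Pt d)}
    (hm : ∀ p ∈ m, p ∈ cthickening δ (line[ℝ, a, b] : Set (Pt d))) (q : Pt d) (r : ℝ) :
    segBallLength (a, b) q r ≤ lengthInBall (a :: (m ++ [b])) q (r + δ) := by
  rw [← ENNReal.ofReal_le_ofReal_iff (lengthInBall_nonneg _ _ _), ofReal_segBallLength]
  exact (measure_mono (segment_subset_biUnion_image_orthogonalProjection hδ hm q r)).trans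
    (hausdorffMeasure_biUnion_image_le (lipschitzWith_orthogonalProjection _) _ _ _)

theorem mul_lengthInBall_le {l : List (Pt d)} {m : ℝ} (hm₀ : 0 ≤ m)
    (hm : ∀ e ∈ edgesOf l, m ≤ dist e.1 e.2) (q : Pt d) {r : ℝ} (hr : 0 ≤ r) :
    m * lengthInBall l q r ≤ 2 * r * lengthInBall l q (r + m) := by
  simp only [lengthInBall, ← List.sum_map_mul_left]
  exact List.sum_le_sum fun e he => mul_segBallLength_le hm₀ (hm e he) q hr

theorem CPacked.two_le {c : ℝ} {l : List (Pt d)} (h : CPacked c l) {q : Pt d} {r : ℝ}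
    (hpos : 0 < lengthInBall l q r) : 2 ≤ c := by
  obtain ⟨e, he, hlen⟩ : ∃ e ∈ edgesOf l, 0 < segBallLength e q r :=
    List.exists_lt_of_sum_lt (fun _ => 0) _ (by simpa [lengthInBall] using hpos)
  set L := dist e.1 e.2
  have hL : 0 < L := hlen.trans_le (segBallLength_le_dist e q r)
  have hL₁ : e.1 ∈ closedBall (midpoint ℝ e.1 e.2) (L / 2) := by
    rw [mem_closedBall, dist_left_midpoint, Real.norm_ofNat, div_eq_inv_mul]
  have hL₂ : e.2 ∈ closedBall (midpoint ℝ e.1 e.2) (L / 2) := by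
    rw [mem_closedBall, dist_right_midpoint, Real.norm_ofNat, div_eq_inv_mul]
  have : L ≤ c * (L / 2) :=
    calc L = segBallLength e (midpoint ℝ e.1 e.2) (L / 2) := (segBallLength_eq_dist hL₁ hL₂).symm
      _ ≤ lengthInBall l (midpoint ℝ e.1 e.2) (L / 2) :=
        List.single_le_sum (List.forall_mem_map.2 fun e' _ => segBallLength_nonneg e' _ _) _
          (List.mem_map_of_mem he)
      _ ≤ c * (L / 2) := h _ _ (half_pos hL)
  nlinarith

theorem CPacked.append_singleton_of_le_dist {c μ : ℝ} (hμ : 0 < μ) {l s : List (Pt d)}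
    (hl : CPacked c l) (hs : s ≠ []) (hlong : ∀ e ∈ edgesOf s, μ ≤ dist e.1 e.2) {w : Pt d}
    (hle : ∀ q r, lengthInBall (s ++ [w]) q r ≤ lengthInBall l q (r + μ)) :
    CPacked (6 * c) (s ++ [w]) := by
  intro q r hr
  change lengthInBall (s ++ [w]) q r ≤ 6 * c * r
  have hl' : ∀ ρ > 0, lengthInBall l q ρ ≤ c * ρ := hl q
  rcases (lengthInBall_nonneg (s ++ [w]) q r).eq_or_lt with hzero | hpos
  · linarith [lengthInBall_nonneg l q r, hl' r hr]
  have hc : 2 ≤ c := hl.two_le (hpos.trans_le (hle q r))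
  rcases le_or_gt μ (2 * r) with hμr | hrμ
  · calc lengthInBall (s ++ [w]) q r ≤ lengthInBall l q (r + μ) := hle q r
      _ ≤ c * (r + μ) := hl' _ (by positivity)
      _ ≤ 6 * c * r := by nlinarith
  have hfar : lengthInBall s q (r + μ) ≤ c * (5 / 2 * μ) :=
    calc lengthInBall s q (r + μ) ≤ lengthInBall (s ++ [w]) q (r + μ) := by
          rw [lengthInBall_append_singleton hs]
          exact le_add_of_nonneg_right (segBallLength_nonneg _ _ _)
      _ ≤ lengthInBall l q (r + μ + μ) := hle q _
      _ ≤ c * (r + μ + μ) := hl' _ (by positivity)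
      _ ≤ c * (5 / 2 * μ) := by gcongr; linarith
  have hnear : lengthInBall s q r ≤ 5 * c * r := by
    refine le_of_mul_le_mul_left ?_ hμ
    calc μ * lengthInBall s q r ≤ 2 * r * lengthInBall s q (r + μ) :=
          mul_lengthInBall_le hμ.le hlong q hr.le
      _ ≤ 2 * r * (c * (5 / 2 * μ)) := by gcongr
      _ = μ * (5 * c * r) := by ring
  calc lengthInBall (s ++ [w]) q r
      = lengthInBall s q r + segBallLength (s.getLast hs, w) q r :=
        lengthInBall_append_singleton hs w q r
    _ ≤ 5 * c * r + 2 * r := add_le_add hnear (segBallLength_le_two_mul _ q hr.le)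
    _ ≤ 6 * c * r := by nlinarith

end Curve

section Simplification

variable {d : ℕ}

theorem le_dist_of_mem_edgesOf_greedyScan {μ : ℝ} {l : List (Pt d)} {p : Pt d} {e : Pt d × Pt d}
    (he : e ∈ edgesOf (p :: greedyScan μ p l)) : μ ≤ dist e.1 e.2 := by
  induction l generalizing p with
  | nil => simp [greedyScan, edgesOf_singleton] at he
  | cons x l ih =>
    rw [greedyScan] at he
    split_ifs at he with hx
    · rcases List.mem_cons.1 he with rfl | he
      · exact hx
      · exact ih he
    · exact ih he

/-- `m` holds the vertices scanned since `p` was marked. -/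
theorem lengthInBall_greedyScan_append_le {μ : ℝ} (hμ : 0 ≤ μ) {p w : Pt d} {m l : List (Pt d)}
    (hm : ∀ x ∈ m, dist p x ≤ μ) (hw : (p :: (m ++ l)).getLast? = some w) (q : Pt d) (r : ℝ) :
    lengthInBall (p :: (greedyScan μ p l ++ [w])) q r ≤
      lengthInBall (p :: (m ++ l)) q (r + μ) := by
  have shortcut {p x : Pt d} {m : List (Pt d)} (hm : ∀ y ∈ m, dist p y ≤ μ) :
      segBallLength (p, x) q r ≤ lengthInBall (p :: (m ++ [x])) q (r + μ) :=
    segBallLength_le_lengthInBall hμ (fun y hy => mem_cthickening_of_dist_le y p μ _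
      (left_mem_affineSpan_pair ℝ p x) (dist_comm p y ▸ hm y hy)) q r
  induction l generalizing p m with
  | nil =>
    rw [greedyScan, List.nil_append, lengthInBall_pair, List.append_nil]
    rw [List.append_nil] at hw
    rcases List.eq_nil_or_concat m with rfl | ⟨m, z, rfl⟩
    · obtain rfl : p = w := by simpa using hw
      exact (segBallLength_le_dist _ q r).trans_eq (dist_self p)
    · obtain rfl : z = w := by simpa [List.getLast?_cons] using hw
      rw [List.concat_eq_append] at hm ⊢
      exact shortcut fun y hy => hm y (List.mem_append_left _ hy)
  | cons x l ih =>
    rw [greedyScan]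
    split_ifs with hx
    · have hrest := ih (p := x) (m := []) (by simp)
        (by simpa [List.getLast?_cons, List.getLast?_append] using hw)
      rw [List.cons_append, lengthInBall_cons_cons, ← List.cons_append (bs := x :: l),
        lengthInBall_append_cons]
      exact add_le_add (shortcut hm) hrest
    · have hm' : ∀ y ∈ m ++ [x], dist p y ≤ μ := by
        simpa [or_imp, forall_and] using ⟨hm, (not_le.1 hx).le⟩
      simpa using ih hm' (by simpa using hw)

theorem simplList_cons_eq_or {μ : ℝ} {p w : Pt d} {l : List (Pt d)}
    (hw : (p :: l).getLast? = some w) :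
    simplList μ (p :: l) = p :: greedyScan μ p l ∨
      simplList μ (p :: l) = p :: (greedyScan μ p l ++ [w]) := by
  cases hlast : l.getLast? with
  | none => exact .inl (by simp only [simplList, hlast])
  | some z =>
    obtain rfl : z = w := by simpa [List.getLast?_cons, hlast] using hw
    simp only [simplList, hlast]
    split_ifs
    · exact .inl rfl
    · exact .inr rfl

theorem lengthInBall_simplList_le {μ : ℝ} {p w : Pt d} {l : List (Pt d)}
    (hw : (p :: l).getLast? = some w) (q : Pt d) (r : ℝ) :
    lengthInBall (simplList μ (p :: l)) q r ≤
      lengthInBall (p :: greedyScan μ p l ++ [w]) q r := by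
  rcases simplList_cons_eq_or (μ := μ) hw with h | h
  · rw [h, lengthInBall_append_singleton (List.cons_ne_nil _ _)]
    exact le_add_of_nonneg_right (segBallLength_nonneg _ _ _)
  · rw [h, List.cons_append]

end Simplification

/-- For `μ > 0`, `c > 0` and a `c`-packed polygonal curve `π` in `ℝ^d`
(given by its nonempty vertex list `l`), the greedy `μ`-simplification `simpl(π,μ)` is
`6c`-packed. -/
theorem simpl_packed {d : ℕ} (μ c : ℝ) (hμ : 0 < μ) (hc : 0 < c)
    (l : List (Pt d)) (hl : l ≠ []) (hpack : CPacked c l) :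
    CPacked (6 * c) (simplList μ l) := by
  obtain ⟨p, l, rfl⟩ := List.exists_cons_of_ne_nil hl
  obtain ⟨w, hw⟩ := Option.isSome_iff_exists.1 (List.getLast?_isSome.2 hl)
  have hmarked : CPacked (6 * c) (p :: greedyScan μ p l ++ [w]) :=
    hpack.append_singleton_of_le_dist hμ (List.cons_ne_nil _ _)
      (fun _ => le_dist_of_mem_edgesOf_greedyScan)
      (lengthInBall_greedyScan_append_le hμ.le (m := []) (by simp) hw)
  exact fun q r hr => (lengthInBall_simplList_le hw q r).trans (hmarked q r hr)
end

section
/- Let K : [0,1] → ℝ^d be a continuous curve and let Q = q_1 q_2 … q_m be a polygonal curve in ℝ^d. Then for every s > d_F(K,Q) there exist parameters 0 = t_1 ≤ t_2 ≤ … ≤ t_m = 1 such that d_F(K|[t_i, t_{i+1}], seg(q_i, q_{i+1})) ≤ s for every 1 ≤ i ≤ m−1. -/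
open scoped BigOperators

/-!
Near-optimal reparametrizations `α` of `K` and `β` of `Q` keep `K ∘ α` and `Q ∘ β` pointwise within
`s`. A right inverse `g` of `β` is automatically monotone, and cutting the common time interval at
`g a` and `g b` matches `Q|[a,b]` with the subcurve of `K` between `α (g a)` and `α (g b)`, for all
`a ≤ b` at once. Taking for `a` and `b` the parameters of consecutive vertices of `Q`, the subcurve
`Q|[a,b]` is an edge.
-/

section

open Set

variable {d m : ℕ} {K P Q R : ℝ → Pt d} {q : ℕ → Pt d} {α β f : ℝ → ℝ} {a b r s : ℝ}

namespace IsReparam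

protected lemma id : IsReparam id :=
  ⟨continuousOn_id, monotoneOn_id, rfl, rfl⟩

lemma mapsTo (hα : IsReparam α) : MapsTo α (Icc 0 1) (Icc 0 1) := by
  simpa only [hα.map_zero, hα.map_one] using hα.monotoneOn.mapsTo_Icc

lemma surjOn (hα : IsReparam α) : SurjOn α (Icc 0 1) (Icc 0 1) := by
  have hivt : SurjOn α (Icc 0 1) (Icc (α 0) (α 1)) :=
    intermediate_value_Icc zero_le_one hα.continuousOn
  rwa [hα.map_zero, hα.map_one] at hivt

lemma exists_monotoneOn_rightInvOn (hα : IsReparam α) :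
    ∃ g : ℝ → ℝ, MonotoneOn g (Icc 0 1) ∧ MapsTo g (Icc 0 1) (Icc 0 1) ∧
      RightInvOn g α (Icc 0 1) ∧ g 0 = 0 ∧ g 1 = 1 := by
  have exists_preimage : ∀ y ∈ Icc (0 : ℝ) 1,
      ∃ x ∈ Icc (0 : ℝ) 1, α x = y ∧ (y = 0 → x = 0) ∧ (y = 1 → x = 1) := by
    intro y hy
    by_cases hy0 : y = 0
    · exact ⟨0, by simp, by rw [hα.map_zero, hy0], fun _ => rfl, fun h => by linarith⟩
    by_cases hy1 : y = 1
    · exact ⟨1, by simp, by rw [hα.map_one, hy1], fun h => absurd h hy0, fun _ => rfl⟩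
    obtain ⟨x, hx, hxy⟩ := hα.surjOn hy
    exact ⟨x, hx, hxy, fun h => absurd h hy0, fun h => absurd h hy1⟩
  choose! g g_mem α_g g_zero g_one using exists_preimage
  exact ⟨g, Function.monotoneOn_of_rightInvOn_of_mapsTo hα.monotoneOn α_g g_mem, g_mem, α_g,
    g_zero 0 (by simp) rfl, g_one 1 (by simp) rfl⟩

end IsReparam

lemma exists_isReparam_of_monotoneOn (hcont : ContinuousOn f (Icc 0 1))
    (hmono : MonotoneOn f (Icc 0 1)) :
    ∃ γ, IsReparam γ ∧ ∀ x ∈ Icc (0 : ℝ) 1, f 0 + γ x * (f 1 - f 0) = f x := by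
  have f_mem : ∀ x ∈ Icc (0 : ℝ) 1, f x ∈ Icc (f 0) (f 1) := hmono.mapsTo_Icc
  rcases (f_mem 1 (by simp)).1.eq_or_lt with hconst | hlt
  · refine ⟨id, .id, fun x hx => ?_⟩
    rw [← hconst, sub_self, mul_zero, add_zero]
    exact le_antisymm (f_mem x hx).1 (hconst ▸ (f_mem x hx).2)
  · have hpos : 0 < f 1 - f 0 := sub_pos.2 hlt
    refine ⟨fun x => (f x - f 0) / (f 1 - f 0), ⟨?_, ?_, ?_, ?_⟩, fun x _ => ?_⟩
    · exact (hcont.sub continuousOn_const).div_const _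
    · exact fun x hx y hy hxy =>
        div_le_div_of_nonneg_right (sub_le_sub_right (hmono hx hy hxy) _) hpos.le
    · rw [sub_self, zero_div]
    · exact div_self hpos.ne'
    · rw [div_mul_cancel₀ _ hpos.ne', add_sub_cancel]

lemma IsReparam.exists_restrict (hα : IsReparam α) (ha : 0 ≤ a) (hab : a ≤ b) (hb : b ≤ 1) :
    ∃ γ, IsReparam γ ∧
      ∀ x ∈ Icc (0 : ℝ) 1, α a + γ x * (α b - α a) = α (a + x * (b - a)) := by
  have hmono : Monotone fun x : ℝ => a + x * (b - a) :=
    (monotone_mul_right_of_nonneg (sub_nonneg.2 hab)).const_add a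
  have hmaps : MapsTo (fun x : ℝ => a + x * (b - a)) (Icc 0 1) (Icc 0 1) := fun x hx =>
    ⟨by nlinarith [hx.1], by nlinarith [hx.2]⟩
  obtain ⟨γ, hγ, hγα⟩ := exists_isReparam_of_monotoneOn
    (hα.continuousOn.comp (by fun_prop) hmaps) (hα.monotoneOn.comp (hmono.monotoneOn _) hmaps)
  exact ⟨γ, hγ, by simpa using hγα⟩

lemma frechetDist_le_of_forall_dist_le (hα : IsReparam α) (hβ : IsReparam β)
    (h : ∀ x ∈ Icc (0 : ℝ) 1, dist (P (α x)) (R (β x)) ≤ r) : frechetDist P R ≤ r := by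
  refine csInf_le_of_le ⟨0, ?_⟩ ⟨α, β, hα, hβ, rfl⟩ (ciSup_le fun x => h x x.2)
  rintro _ ⟨_, _, -, -, rfl⟩
  exact Real.iSup_nonneg fun _ => dist_nonneg

lemma exists_isReparam_forall_dist_lt (hP : Bornology.IsBounded (P '' Icc 0 1))
    (hR : Bornology.IsBounded (R '' Icc 0 1)) (hs : frechetDist P R < s) :
    ∃ α β, IsReparam α ∧ IsReparam β ∧ ∀ x ∈ Icc (0 : ℝ) 1, dist (P (α x)) (R (β x)) < s := by
  obtain ⟨_, ⟨α, β, hα, hβ, rfl⟩, hlt⟩ :=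
    exists_lt_of_csInf_lt (by exact ⟨_, id, id, .id, .id, rfl⟩) hs
  obtain ⟨C, hC⟩ := Metric.isBounded_iff.1 (hP.union hR)
  -- In `ℝ` an unbounded supremum is `0`, so it bounds the distances only once they are bounded.
  have hbdd : BddAbove (range fun x : Icc (0 : ℝ) 1 => dist (P (α x)) (R (β x))) := by
    refine ⟨C, ?_⟩
    rintro _ ⟨x, rfl⟩
    exact hC (.inl (mem_image_of_mem P (hα.mapsTo x.2))) (.inr (mem_image_of_mem R (hβ.mapsTo x.2)))
  exact ⟨α, β, hα, hβ, fun x hx => (le_ciSup hbdd ⟨x, hx⟩).trans_lt hlt⟩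

lemma frechetDist_congr_right (h : EqOn Q R (Icc 0 1)) : frechetDist P Q = frechetDist P R := by
  have iSup_eq (α β : ℝ → ℝ) (hβ : IsReparam β) :
      (⨆ x : Icc (0 : ℝ) 1, dist (P (α x)) (Q (β x))) =
        ⨆ x : Icc (0 : ℝ) 1, dist (P (α x)) (R (β x)) :=
    iSup_congr fun x => by rw [h (hβ.mapsTo x.2)]
  exact congrArg sInf <| Set.ext fun r => exists₂_congr fun α β => and_congr_right fun _ =>
    and_congr_right fun hβ => by rw [iSup_eq α β hβ]

lemma frechetDist_subcurve_le (hα : IsReparam α) (hβ : IsReparam β)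
    (ha : 0 ≤ a) (hab : a ≤ b) (hb : b ≤ 1)
    (h : ∀ x ∈ Icc a b, dist (P (α x)) (R (β x)) ≤ r) :
    frechetDist (subcurve P (α a) (α b)) (subcurve R (β a) (β b)) ≤ r := by
  obtain ⟨γ, hγ, hγα⟩ := hα.exists_restrict ha hab hb
  obtain ⟨δ, hδ, hδβ⟩ := hβ.exists_restrict ha hab hb
  refine frechetDist_le_of_forall_dist_le hγ hδ fun x hx => ?_
  rw [subcurve, subcurve, hγα x hx, hδβ x hx]
  exact h _ ⟨by nlinarith [hx.1], by nlinarith [hx.2]⟩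

theorem exists_monotoneOn_forall_frechetDist_subcurve_le (hP : Bornology.IsBounded (P '' Icc 0 1))
    (hR : Bornology.IsBounded (R '' Icc 0 1)) (hs : frechetDist P R < s) :
    ∃ φ : ℝ → ℝ, φ 0 = 0 ∧ φ 1 = 1 ∧ MonotoneOn φ (Icc 0 1) ∧
      ∀ a ∈ Icc (0 : ℝ) 1, ∀ b ∈ Icc (0 : ℝ) 1, a ≤ b →
        frechetDist (subcurve P (φ a) (φ b)) (subcurve R a b) ≤ s := by
  obtain ⟨α, β, hα, hβ, hdist⟩ := exists_isReparam_forall_dist_lt hP hR hs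
  obtain ⟨g, g_mono, g_mem, β_g, g_zero, g_one⟩ := hβ.exists_monotoneOn_rightInvOn
  refine ⟨α ∘ g, ?_, ?_, hα.monotoneOn.comp g_mono g_mem, fun a ha b hb hab => ?_⟩
  · rw [Function.comp_apply, g_zero, hα.map_zero]
  · rw [Function.comp_apply, g_one, hα.map_one]
  · have hle := frechetDist_subcurve_le hα hβ (g_mem ha).1 (g_mono ha hb hab) (g_mem hb).2
      fun x hx => (hdist x (Icc_subset_Icc (g_mem ha).1 (g_mem hb).2 hx)).le
    rwa [β_g ha, β_g hb] at hle

lemma AffineOn.eqOn_subcurve_seg (h : AffineOn K a b) (hab : a ≤ b) :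
    EqOn (subcurve K a b) (seg (K a) (K b)) (Icc 0 1) := by
  intro x hx
  rcases hab.eq_or_lt with rfl | hlt
  · simp only [subcurve, seg, sub_self, mul_zero, add_zero]
    module
  · have hmem : a + x * (b - a) ∈ Icc a b := ⟨by nlinarith [hx.1], by nlinarith [hx.2]⟩
    rw [subcurve, h _ hmem, add_sub_cancel_left, mul_div_cancel_right₀ _ (sub_pos.2 hlt).ne', seg]
    module

lemma AffineOn.image_subset_segment (h : AffineOn K a b) :
    K '' Icc a b ⊆ segment ℝ (K a) (K b) := by
  rintro _ ⟨x, hx, rfl⟩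
  rw [segment_eq_image', h x hx]
  exact ⟨(x - a) / (b - a), unitInterval.div_mem (sub_nonneg.2 hx.1)
    (sub_nonneg.2 (hx.1.trans hx.2)) (sub_le_sub_right hx.2 a), rfl⟩

lemma exists_natCast_div_mem_Icc {n : ℕ} (hn : 0 < n) {x : ℝ} (hx : x ∈ Icc (0 : ℝ) 1) :
    ∃ i < n, x ∈ Icc ((i : ℝ) / n) (((i : ℝ) + 1) / n) := by
  have hn' : (0 : ℝ) < n := Nat.cast_pos.2 hn
  rcases hx.2.eq_or_lt with rfl | hlt
  · refine ⟨n - 1, Nat.sub_lt hn one_pos, ?_, ?_⟩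
    · rw [div_le_one hn', Nat.cast_le]
      exact n.sub_le 1
    · rw [Nat.cast_pred hn, sub_add_cancel, div_self hn'.ne']
  · have hnonneg : 0 ≤ x * n := mul_nonneg hx.1 hn'.le
    refine ⟨⌊x * n⌋₊, (Nat.floor_lt hnonneg).2 (mul_lt_of_lt_one_left hn' hlt), ?_, ?_⟩
    · exact (div_le_iff₀ hn').2 (Nat.floor_le hnonneg)
    · exact (le_div_iff₀ hn').2 (Nat.lt_floor_add_one _).le

namespace IsPolygonalParam

lemma image_subset_convexHull (hQ : IsPolygonalParam m q Q) (hm : 2 ≤ m) :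
    Q '' Icc 0 1 ⊆ convexHull ℝ (q '' Iio m) := by
  rintro _ ⟨x, hx, rfl⟩
  obtain ⟨i, hi, hxi⟩ := exists_natCast_div_mem_Icc (n := m - 1) (by lia) hx
  rw [Nat.cast_pred (by lia)] at hxi
  have hmem := (hQ.2 i (by lia)).image_subset_segment (mem_image_of_mem Q hxi)
  rw [← Nat.cast_add_one, hQ.1 i (by lia), hQ.1 (i + 1) (by lia)] at hmem
  exact segment_subset_convexHull (mem_image_of_mem q (mem_Iio.2 (by lia)))
    (mem_image_of_mem q (mem_Iio.2 (by lia))) hmem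

lemma isBounded_image (hQ : IsPolygonalParam m q Q) (hm : 2 ≤ m) :
    Bornology.IsBounded (Q '' Icc 0 1) :=
  (isBounded_convexHull.2 ((finite_Iio m).image q).isBounded).subset
    (hQ.image_subset_convexHull hm)

lemma eqOn_subcurve_seg (hQ : IsPolygonalParam m q Q) {i : ℕ} (hi : i + 1 < m) :
    EqOn (subcurve Q ((i : ℝ) / ((m : ℝ) - 1)) (((i + 1 : ℕ) : ℝ) / ((m : ℝ) - 1)))
      (seg (q i) (q (i + 1))) (Icc 0 1) := by
  have hm : (0 : ℝ) ≤ (m : ℝ) - 1 := sub_nonneg.2 (Nat.one_le_cast.2 (by lia))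
  have hedge := (hQ.2 i hi).eqOn_subcurve_seg (by gcongr; exact le_add_of_nonneg_right zero_le_one)
  rwa [← Nat.cast_add_one, hQ.1 i (by lia), hQ.1 (i + 1) hi] at hedge

end IsPolygonalParam

theorem frechet_pieces_exist_general (hm : 2 ≤ m) (hK : Bornology.IsBounded (K '' Icc 0 1))
    (hQ : IsPolygonalParam m q Q) (hs : frechetDist K Q < s) :
    ∃ t : ℕ → ℝ, t 0 = 0 ∧ t (m - 1) = 1 ∧
      (∀ i j, i ≤ j → j ≤ m - 1 → t i ≤ t j) ∧
      ∀ i, i + 1 < m →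
        frechetDist (subcurve K (t i) (t (i + 1))) (seg (q i) (q (i + 1))) ≤ s := by
  obtain ⟨φ, φ_zero, φ_one, φ_mono, hφ⟩ :=
    exists_monotoneOn_forall_frechetDist_subcurve_le hK (hQ.isBounded_image hm) hs
  have cast_pred : ((m - 1 : ℕ) : ℝ) = (m : ℝ) - 1 := Nat.cast_pred (by lia)
  have hpos : (0 : ℝ) < (m : ℝ) - 1 := cast_pred ▸ Nat.cast_pos.2 (by lia)
  have vertex_mem (i : ℕ) (hi : i ≤ m - 1) : (i : ℝ) / ((m : ℝ) - 1) ∈ Icc (0 : ℝ) 1 :=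
    unitInterval.div_mem i.cast_nonneg hpos.le (cast_pred ▸ Nat.cast_le.2 hi)
  have vertex_mono : Monotone fun i : ℕ => (i : ℝ) / ((m : ℝ) - 1) :=
    Nat.mono_cast.div_const hpos.le
  refine ⟨fun i => φ (i / ((m : ℝ) - 1)), ?_, ?_, fun i j hij hj => ?_, fun i hi => ?_⟩
  · simp only [Nat.cast_zero, zero_div, φ_zero]
  · simp only [cast_pred, div_self hpos.ne', φ_one]
  · exact φ_mono (vertex_mem i (hij.trans hj)) (vertex_mem j hj) (vertex_mono hij)
  · rw [← frechetDist_congr_right (hQ.eqOn_subcurve_seg hi)]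
    exact hφ _ (vertex_mem i (by lia)) _ (vertex_mem (i + 1) (by lia)) (vertex_mono i.le_succ)

end

/-- Let `K : [0,1] → ℝ^d` be continuous and `Q = q_1 … q_m` a polygonal
curve. For every `s > d_F(K,Q)` there exist `0 = t_1 ≤ … ≤ t_m = 1` (here `0`-indexed) with
`d_F(K|[t_i, t_{i+1}], seg(q_i, q_{i+1})) ≤ s` for every `i`. -/
theorem frechet_pieces_exist {d : ℕ} (m : ℕ) (hm : 2 ≤ m)
    (K : ℝ → Pt d) (hK : ContinuousOn K (Set.Icc 0 1))
    (q : ℕ → Pt d) (Q : ℝ → Pt d) (hQ : IsPolygonalParam m q Q)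
    (s : ℝ) (hs : frechetDist K Q < s) :
    ∃ t : ℕ → ℝ, t 0 = 0 ∧ t (m - 1) = 1 ∧
      (∀ i j, i ≤ j → j ≤ m - 1 → t i ≤ t j) ∧
      ∀ i, i + 1 < m →
        frechetDist (subcurve K (t i) (t (i + 1))) (seg (q i) (q (i + 1))) ≤ s :=
  frechet_pieces_exist_general hm (isCompact_Icc.image_of_continuousOn hK).isBounded hQ hs
end

section
/- Let K : [0,1] → ℝ^d be a continuous curve and let a ≤ b ≤ c ≤ e be parameters in [0,1] such that K is affine-linear on [a,b] (i.e., K(x) = K(a) + ((x−a)/(b−a))·(K(b)−K(a)) for x ∈ [a,b], with K constant on [a,b] if a = b) and affine-linear on [c,e]. Then d_F( K|[b,e], K|[a,c] ) ≤ max( ‖K(a) − K(b)‖, ‖K(c) − K(e)‖ ). -/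
open scoped BigOperators

/-!
Walk a single parameter `s` from `a` to `e`, with the first curve at `K (max s b)` and the second
at `K (min s c)`. For `s ≤ b` the first curve waits at `K b`, for `s ≥ c` the second waits at `K c`,
and in between the two coincide. While one of them waits, the other traverses an affine piece
having the waiting point as an endpoint, so their distance is at most the length of that piece.
-/

open Set AffineMap

theorem subcurve_apply {d : ℕ} (K : ℝ → Pt d) (s t u : ℝ) :
    subcurve K s t u = K (lineMap s t u) := by
  rw [subcurve, lineMap_apply_ring', add_comm]

theorem AffineOn.eq_lineMap {d : ℕ} {K : ℝ → Pt d} {a b x : ℝ} (h : AffineOn K a b)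
    (hx : x ∈ Icc a b) : K x = lineMap (K a) (K b) ((x - a) / (b - a)) := by
  rw [h x hx, lineMap_apply_module', add_comm]

theorem AffineOn.dist_le {d : ℕ} {K : ℝ → Pt d} {a b x y : ℝ} (h : AffineOn K a b)
    (hx : x ∈ Icc a b) (hy : y ∈ Icc a b) : dist (K x) (K y) ≤ dist (K a) (K b) := by
  have ratio_mem {z : ℝ} (hz : z ∈ Icc a b) : (z - a) / (b - a) ∈ Icc (0 : ℝ) 1 :=
    unitInterval.div_mem (sub_nonneg.2 hz.1) (sub_nonneg.2 (hz.1.trans hz.2))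
      (sub_le_sub_right hz.2 a)
  rw [h.eq_lineMap hx, h.eq_lineMap hy, dist_lineMap_lineMap]
  exact mul_le_of_le_one_left dist_nonneg
    (Real.dist_le_of_mem_Icc_01 (ratio_mem hx) (ratio_mem hy))

theorem frechetDist_le {d : ℕ} {P Q : ℝ → Pt d} {α β : ℝ → ℝ} {r : ℝ}
    (hα : IsReparam α) (hβ : IsReparam β)
    (h : ∀ t ∈ Icc (0 : ℝ) 1, dist (P (α t)) (Q (β t)) ≤ r) : frechetDist P Q ≤ r := by
  have bddBelow : BddBelow {r : ℝ | ∃ α β : ℝ → ℝ, IsReparam α ∧ IsReparam β ∧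
      r = ⨆ t : Icc (0 : ℝ) 1, dist (P (α t)) (Q (β t))} := by
    refine ⟨0, ?_⟩
    rintro _ ⟨_, _, _, _, rfl⟩
    exact Real.iSup_nonneg fun _ ↦ dist_nonneg
  exact (csInf_le bddBelow ⟨α, β, hα, hβ, rfl⟩).trans (ciSup_le fun t ↦ h t t.2)

theorem exists_isReparam_lineMap_eq {f : ℝ → ℝ} {p q : ℝ} (hpq : p ≤ q)
    (hf : ContinuousOn f (Icc p q)) (hmono : MonotoneOn f (Icc p q)) :
    ∃ α, IsReparam α ∧
      ∀ t ∈ Icc (0 : ℝ) 1, lineMap (f p) (f q) (α t) = f (lineMap p q t) := by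
  have hp : p ∈ Icc p q := left_mem_Icc.2 hpq
  have hq : q ∈ Icc p q := right_mem_Icc.2 hpq
  have maps : MapsTo (lineMap p q : ℝ → ℝ) (Icc 0 1) (Icc p q) := fun _ ↦
    (convex_Icc p q).lineMap_mem hp hq
  rcases (hmono hp hq hpq).eq_or_lt with hconst | hlt
  · refine ⟨id, ⟨continuousOn_id, monotoneOn_id, rfl, rfl⟩, fun t ht ↦ ?_⟩
    have hx := maps ht
    rw [← hconst, lineMap_same_apply]
    exact le_antisymm (hmono hp hx hx.1) ((hmono hx hq hx.2).trans_eq hconst.symm)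
  · have hpos : 0 < f q - f p := sub_pos.2 hlt
    refine ⟨fun t ↦ (f (lineMap p q t) - f p) / (f q - f p), ⟨?_, ?_, ?_, ?_⟩, fun t _ ↦ ?_⟩
    · exact ((hf.comp lineMap_continuous.continuousOn maps).sub continuousOn_const).div_const _
    · intro s hs t ht hst
      have := hmono (maps hs) (maps ht) (lineMap_mono hpq hst)
      dsimp only
      gcongr
    · simp only [lineMap_apply_zero, sub_self, zero_div]
    · simp only [lineMap_apply_one, div_self hpos.ne']
    · rw [lineMap_apply_ring', div_mul_cancel₀ _ hpos.ne', sub_add_cancel]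

theorem frechetDist_subcurve_le_s10 {d : ℕ} {K L : ℝ → Pt d} {f g : ℝ → ℝ} {p q r : ℝ}
    (hpq : p ≤ q) (hf : ContinuousOn f (Icc p q)) (hfmono : MonotoneOn f (Icc p q))
    (hg : ContinuousOn g (Icc p q)) (hgmono : MonotoneOn g (Icc p q))
    (h : ∀ s ∈ Icc p q, dist (K (f s)) (L (g s)) ≤ r) :
    frechetDist (subcurve K (f p) (f q)) (subcurve L (g p) (g q)) ≤ r := by
  obtain ⟨α, hα, hfα⟩ := exists_isReparam_lineMap_eq hpq hf hfmono
  obtain ⟨β, hβ, hgβ⟩ := exists_isReparam_lineMap_eq hpq hg hgmono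
  refine frechetDist_le hα hβ fun t ht ↦ ?_
  rw [subcurve_apply, subcurve_apply, hfα t ht, hgβ t ht]
  exact h _ ((convex_Icc p q).lineMap_mem (left_mem_Icc.2 hpq) (right_mem_Icc.2 hpq) ht)

theorem frechet_shift_le_general {d : ℕ} {K : ℝ → Pt d} {a b c e r : ℝ}
    (hab : a ≤ b) (hbc : b ≤ c) (hce : c ≤ e)
    (hleft : ∀ s ∈ Icc a b, dist (K b) (K s) ≤ r)
    (hright : ∀ s ∈ Icc c e, dist (K s) (K c) ≤ r) :
    frechetDist (subcurve K b e) (subcurve K a c) ≤ r := by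
  have hac : a ≤ c := hab.trans hbc
  have hbe : b ≤ e := hbc.trans hce
  have matched : ∀ s ∈ Icc a e, dist (K (max s b)) (K (min s c)) ≤ r := by
    intro s hs
    rcases le_total s b with hsb | hbs
    · rw [max_eq_right hsb, min_eq_left (hsb.trans hbc)]
      exact hleft s ⟨hs.1, hsb⟩
    rw [max_eq_left hbs]
    rcases le_total s c with hsc | hcs
    · rw [min_eq_left hsc, dist_self]
      exact dist_nonneg.trans (hleft b (right_mem_Icc.2 hab))
    · rw [min_eq_right hcs]
      exact hright s ⟨hcs, hs.2⟩
  have bound := frechetDist_subcurve_le_s10 (f := (max · b)) (g := (min · c)) (hac.trans hce)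
    (by fun_prop) (fun _ _ _ _ h ↦ max_le_max_right _ h)
    (by fun_prop) (fun _ _ _ _ h ↦ min_le_min_right _ h) matched
  simpa only [max_eq_right hab, max_eq_left hbe, min_eq_left hac, min_eq_right hce] using bound

/-- Let `K : [0,1] → ℝ^d` be continuous and `a ≤ b ≤ c ≤ e` in `[0,1]` with
`K` affine-linear on `[a,b]` and on `[c,e]`. Then
`d_F(K|[b,e], K|[a,c]) ≤ max (‖K a − K b‖, ‖K c − K e‖)`. -/
theorem frechet_shift_le {d : ℕ} (K : ℝ → Pt d) (hK : ContinuousOn K (Set.Icc 0 1))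
    (a b c e : ℝ) (hab : a ≤ b) (hbc : b ≤ c) (hce : c ≤ e)
    (ha : 0 ≤ a) (he : e ≤ 1)
    (h1 : AffineOn K a b) (h2 : AffineOn K c e) :
    frechetDist (subcurve K b e) (subcurve K a c) ≤
      max (dist (K a) (K b)) (dist (K c) (K e)) :=
  frechet_shift_le_general hab hbc hce
    (fun _ hs ↦ (h1.dist_le (right_mem_Icc.2 hab) hs).trans (le_max_left _ _))
    (fun _ hs ↦ (h2.dist_le hs (left_mem_Icc.2 hce)).trans (le_max_right _ _))
end

section
/- There exists a constant C depending only on d such that the following holds. Given a finite set P of n points in ℝ^d and any 0 < ε < 1, there exists a set Z of at most C·n/ε^d nonnegative real numbers such that for any two distinct points p, q ∈ P there exist x, x' ∈ Z with x ≤ ‖p − q‖ ≤ x' ≤ (1+ε)·x. -/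
open scoped BigOperators

/-!
Up to a constant factor, the distances of an `n`-point set take at most `n - 1` values. Let `N r` be
the largest number of points with pairwise distances exceeding `r`. For a pair at distance `D`,
`N (3 D / 2) < N (D / 4)`: otherwise a largest `3 D / 2`-separated set would also
be a largest `D / 4`-separated set, hence a `D / 4`-cover, and the two points of the pair would lie
near two distinct members at distance at most `3 D / 2`. As `N` only takes the values `1, …, n`, it
drops at most `n - 1` times. Geometric progressions of ratio `1 + ε`, each with `O(1 / ε)` terms and
starting from `2 / 3` of the location of a drop, then bracket every distance.
-/

open scoped NNReal ENNReal

lemma exists_finset_jumps_of_antitone {α β : Type*} [ConditionallyCompleteLinearOrder α]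
    [Preorder β] {f : α → β} (hf : Antitone f) (Y : Finset β) :
    ∃ J : Finset α, J.card ≤ Y.card ∧
      ∀ s t, f s ∈ Y → f t < f s → ∃ j ∈ J, j ∈ Set.Icc s t := by
  classical
  refine ⟨Y.image fun y => sSup {u | y ≤ f u}, Finset.card_image_le, fun s t hs hst => ?_⟩
  have ht : t ∈ upperBounds {u | f s ≤ f u} := fun u hu =>
    le_of_not_gt fun htu => (hu.trans (hf htu.le)).not_gt hst
  exact ⟨_, Finset.mem_image_of_mem _ hs, le_csSup ⟨t, ht⟩ le_rfl, csSup_le ⟨s, le_rfl⟩ ht⟩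

section Packing

variable {X : Type*} [PseudoEMetricSpace X] {A C : Set X} {r s t : ℝ≥0}

lemma packingNumber_antitone (A : Set X) : Antitone fun r : ℝ≥0 => Metric.packingNumber r A := by
  intro s t hst
  simp only [Metric.packingNumber, iSup_le_iff]
  exact fun C hCA hC => (hC.anti (by exact_mod_cast hst)).encard_le_packingNumber hCA

lemma isCover_of_packingNumber_le_encard (hCA : C ⊆ A) (hC : Metric.IsSeparated r C)
    (hfin : C.Finite) (hcard : Metric.packingNumber r A ≤ C.encard) : Metric.IsCover r A C := by
  refine Metric.IsCover.of_maximal_isSeparated ⟨⟨hCA, hC⟩, fun B hB hCB => ?_⟩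
  have hBC : B.encard ≤ C.encard := (hB.2.encard_le_packingNumber hB.1).trans hcard
  exact (hfin.eq_of_subset_of_encard_le hCB hBC).ge

lemma packingNumber_lt_packingNumber (hA : Metric.packingNumber t A ≠ ⊤) {p q : X} (hp : p ∈ A)
    (hq : q ∈ A) (hs : s + s < edist p q) (ht : s + edist p q + s ≤ t) :
    Metric.packingNumber t A < Metric.packingNumber s A := by
  by_contra! hle
  obtain ⟨C, hCA, hfin, hC, hcard⟩ := Metric.exists_set_encard_eq_packingNumber hA
  have hst : (s : ℝ≥0∞) ≤ t := le_add_self.trans ht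
  have hcover := isCover_of_packingNumber_le_encard hCA (hC.anti hst) hfin (hle.trans_eq hcard.symm)
  obtain ⟨a, ha, hpa : edist p a ≤ s⟩ := hcover hp
  obtain ⟨b, hb, hqb : edist q b ≤ s⟩ := hcover hq
  have hab : a ≠ b := by
    rintro rfl
    exact ((edist_triangle_right p q a).trans (add_le_add hpa hqb)).not_gt hs
  refine (hC ha hb hab).not_ge ?_
  calc edist a b ≤ edist a p + edist p q + edist q b := edist_triangle4 a p q b
    _ ≤ s + edist p q + s := by rw [edist_comm a p]; gcongr
    _ ≤ t := ht

lemma exists_finset_jumps_packingNumber (P : Finset X) :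
    ∃ J : Finset ℝ≥0, J.card ≤ P.card - 1 ∧ ∀ s t : ℝ≥0,
      Metric.packingNumber t (P : Set X) < Metric.packingNumber s (P : Set X) →
        ∃ j ∈ J, j ∈ Set.Icc s t := by
  classical
  obtain ⟨J, hJcard, hJ⟩ := exists_finset_jumps_of_antitone (packingNumber_antitone (P : Set X))
    ((Finset.Icc 2 P.card).image Nat.cast)
  refine ⟨J, ?_, fun s t hst => hJ s t ?_ hst⟩
  · calc J.card ≤ (Finset.Icc 2 P.card).card := hJcard.trans Finset.card_image_le
      _ = P.card - 1 := Nat.card_Icc 2 P.card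
  have hP : (P : Set X).Nonempty := Metric.packingNumber_pos_iff.1 (pos_of_gt hst)
  have hpos : 0 < Metric.packingNumber t (P : Set X) := Metric.packingNumber_pos_iff.2 hP
  have hle : Metric.packingNumber s (P : Set X) ≤ P.card :=
    (Metric.packingNumber_le_encard_self _).trans_eq (Set.encard_coe_eq_coe_finsetCard P)
  lift Metric.packingNumber s (P : Set X) to ℕ using
    ne_top_of_le_ne_top (ENat.natCast_ne_top _) hle with k
  lift Metric.packingNumber t (P : Set X) to ℕ using hst.ne_top with m
  norm_cast at hle hst hpos
  exact Finset.mem_image_of_mem _ (Finset.mem_Icc.2 ⟨by omega, hle⟩)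

end Packing

section DistanceScales

variable {X : Type*} [PseudoMetricSpace X]

lemma packingNumber_lt_packingNumber_nndist {A : Set X} {p q : X}
    (hA : Metric.packingNumber (3 / 2 * nndist p q) A ≠ ⊤) (hp : p ∈ A) (hq : q ∈ A)
    (hpq : 0 < dist p q) :
    Metric.packingNumber (3 / 2 * nndist p q) A < Metric.packingNumber (nndist p q / 4) A := by
  refine packingNumber_lt_packingNumber hA hp hq ?_ ?_
  · rw [edist_nndist]
    norm_cast
    rw [← NNReal.coe_lt_coe]
    push_cast [coe_nndist]
    linarith
  · rw [edist_nndist]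
    norm_cast
    rw [← NNReal.coe_le_coe]
    push_cast [coe_nndist]
    linarith

lemma exists_finset_distance_scales (P : Finset X) :
    ∃ L : Finset ℝ, L.card ≤ P.card - 1 ∧ (∀ l ∈ L, 0 ≤ l) ∧
      ∀ p ∈ P, ∀ q ∈ P, 0 < dist p q → ∃ l ∈ L, l ≤ dist p q ∧ dist p q ≤ 6 * l := by
  classical
  obtain ⟨J, hJcard, hJ⟩ := exists_finset_jumps_packingNumber P
  let scale : ℝ≥0 → ℝ := fun j => 2 / 3 * j
  refine ⟨J.image scale, Finset.card_image_le.trans hJcard, ?_, fun p hp q hq hpq => ?_⟩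
  · simp only [Finset.forall_mem_image, scale]
    intro j _
    positivity
  have hfin (r : ℝ≥0) : Metric.packingNumber r (P : Set X) ≠ ⊤ :=
    ne_top_of_le_ne_top P.finite_toSet.encard_lt_top.ne (Metric.packingNumber_le_encard_self _)
  obtain ⟨j, hj, hlow, hupp⟩ :=
    hJ _ _ (packingNumber_lt_packingNumber_nndist (hfin _) hp hq hpq)
  rw [← NNReal.coe_le_coe] at hlow hupp
  push_cast [coe_nndist] at hlow hupp
  refine ⟨scale j, Finset.mem_image_of_mem scale hj, ?_, ?_⟩ <;> simp only [scale] <;> linarith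

end DistanceScales

section GeometricGrid

lemma exists_geometric_bracket {a D c ε : ℝ} (hε : 0 < ε) (ha : 0 < a) (haD : a ≤ D)
    (hDa : D ≤ (1 + c) * a) :
    ∃ k ≤ ⌊c / ε⌋₊, a * (1 + ε) ^ k ≤ D ∧ D ≤ a * (1 + ε) ^ (k + 1) := by
  obtain ⟨k, hlow, hupp⟩ := exists_nat_pow_near ((one_le_div ha).2 haD) (lt_add_of_pos_right 1 hε)
  have hbernoulli : 1 + k * ε ≤ 1 + c :=
    calc 1 + k * ε ≤ (1 + ε) ^ k := one_add_mul_le_pow (by linarith) k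
      _ ≤ D / a := hlow
      _ ≤ 1 + c := (div_le_iff₀ ha).2 hDa
  refine ⟨k, Nat.le_floor ((le_div_iff₀ hε).2 (by linarith)), ?_, ?_⟩
  · rwa [mul_comm, ← le_div_iff₀ ha]
  · rw [mul_comm, ← div_le_iff₀ ha]
    exact hupp.le

lemma exists_finset_geometric_refinement (L : Finset ℝ) (hL : ∀ l ∈ L, 0 ≤ l) {ε : ℝ} (hε : 0 < ε)
    (c : ℝ) :
    ∃ Z : Finset ℝ, Z.card ≤ L.card * (⌊c / ε⌋₊ + 2) ∧ (∀ x ∈ Z, 0 ≤ x) ∧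
      ∀ l ∈ L, 0 < l → ∀ D, l ≤ D → D ≤ (1 + c) * l →
        ∃ x ∈ Z, ∃ x' ∈ Z, x ≤ D ∧ D ≤ x' ∧ x' ≤ (1 + ε) * x := by
  classical
  let grid : ℝ × ℕ → ℝ := fun z => z.1 * (1 + ε) ^ z.2
  let I := L ×ˢ Finset.range (⌊c / ε⌋₊ + 2)
  refine ⟨I.image grid, ?_, ?_, fun l hl hl0 D hlD hDl => ?_⟩
  · calc (I.image grid).card ≤ I.card := Finset.card_image_le
      _ = L.card * (⌊c / ε⌋₊ + 2) := by rw [Finset.card_product, Finset.card_range]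
  · simp only [Finset.forall_mem_image]
    exact fun z hz => mul_nonneg (hL z.1 (Finset.mem_product.1 hz).1) (by positivity)
  · obtain ⟨k, hk, hlow, hupp⟩ := exists_geometric_bracket hε hl0 hlD hDl
    have hmem : ∀ i ≤ k + 1, grid (l, i) ∈ I.image grid := fun i hi =>
      Finset.mem_image_of_mem grid (Finset.mk_mem_product hl (Finset.mem_range.2 (by omega)))
    exact ⟨_, hmem k (by omega), _, hmem (k + 1) le_rfl, hlow, hupp, by
      simp only [grid, pow_succ]; exact le_of_eq (by ring)⟩

end GeometricGrid

theorem approx_distance_selection_general {X : Type*} [PseudoMetricSpace X] (P : Finset X) {ε : ℝ}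
    (hε : 0 < ε) :
    ∃ Z : Finset ℝ, Z.card ≤ (P.card - 1) * (⌊5 / ε⌋₊ + 2) ∧ (∀ x ∈ Z, 0 ≤ x) ∧
      ∀ p ∈ P, ∀ q ∈ P, 0 < dist p q →
        ∃ x ∈ Z, ∃ x' ∈ Z, x ≤ dist p q ∧ dist p q ≤ x' ∧ x' ≤ (1 + ε) * x := by
  obtain ⟨L, hLcard, hL0, hL⟩ := exists_finset_distance_scales P
  obtain ⟨Z, hZcard, hZ0, hZ⟩ := exists_finset_geometric_refinement L hL0 hε 5
  refine ⟨Z, hZcard.trans (Nat.mul_le_mul_right _ hLcard), hZ0, fun p hp q hq hpq => ?_⟩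
  obtain ⟨l, hl, hlow, hupp⟩ := hL p hp q hq hpq
  exact hZ l hl (by linarith) _ hlow (by linarith)

lemma grid_card_le_div_pow {n d : ℕ} {ε : ℝ} (hn : d = 0 → n ≤ 1) (hε : 0 < ε) (hε1 : ε ≤ 1) :
    (((n - 1) * (⌊5 / ε⌋₊ + 2) : ℕ) : ℝ) ≤ 7 * n / ε ^ d := by
  rcases eq_or_ne d 0 with hd | hd
  · rw [Nat.sub_eq_zero_of_le (hn hd), zero_mul, Nat.cast_zero]
    positivity
  have hfloor : (⌊5 / ε⌋₊ : ℝ) ≤ 5 / ε := Nat.floor_le (by positivity)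
  have htwo : 2 ≤ 2 / ε := le_div_self zero_le_two hε hε1
  calc (((n - 1) * (⌊5 / ε⌋₊ + 2) : ℕ) : ℝ) ≤ (n * (⌊5 / ε⌋₊ + 2) : ℕ) := by gcongr; omega
    _ = n * (⌊5 / ε⌋₊ + 2) := by push_cast; rfl
    _ ≤ n * (5 / ε + 2 / ε) := by gcongr
    _ = 7 * n / ε := by ring
    _ ≤ 7 * n / ε ^ d := by gcongr; exact pow_le_of_le_one hε.le hε1 hd

/-- There is a constant `C` depending only on `d` such that: for every
finite set `P` of points in `ℝ^d` and every `0 < ε < 1` there is a set `Z` of at most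
`C·|P|/ε^d` nonnegative reals such that every pairwise distance of `P` is sandwiched as
`x ≤ ‖p − q‖ ≤ x' ≤ (1+ε)·x` for some `x, x' ∈ Z`. -/
theorem approx_distance_selection (d : ℕ) :
    ∃ C : ℝ, 0 < C ∧ ∀ (P : Finset (Pt d)) (ε : ℝ), 0 < ε → ε < 1 →
      ∃ Z : Finset ℝ, (Z.card : ℝ) ≤ C * P.card / ε ^ d ∧ (∀ x ∈ Z, 0 ≤ x) ∧
        ∀ p ∈ P, ∀ q ∈ P, p ≠ q →
          ∃ x ∈ Z, ∃ x' ∈ Z, x ≤ dist p q ∧ dist p q ≤ x' ∧ x' ≤ (1 + ε) * x := by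
  refine ⟨7, by norm_num, fun P ε hε hε1 => ?_⟩
  obtain ⟨Z, hcard, hZ0, hZ⟩ := approx_distance_selection_general P hε
  have hP : d = 0 → P.card ≤ 1 := by
    rintro rfl
    exact Finset.card_le_one_of_subsingleton P
  exact ⟨Z, (Nat.cast_le.2 hcard).trans (grid_card_le_div_pow hP hε hε1.le), hZ0,
    fun p hp q hq hpq => hZ p hp q hq (dist_pos.2 hpq)⟩
end

section
/- There exists a constant C depending only on d such that the following holds. Given a finite set P of n points in ℝ^d, there exists a set Z of at most C·n nonnegative real numbers such that for any two distinct points p, q ∈ P there exist x, x' ∈ Z with x ≤ ‖p − q‖ ≤ x' ≤ 2x. -/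
open scoped BigOperators

/-!
Keep greedily, from the shortest pair of points upwards, every pair more than twice as long as the
last pair kept. Each distance then lies between the length `t` of a kept pair and `2 * t`, so the
numbers `t` and `2 * t` suffice. Each kept pair is longer than all the shorter kept pairs together;
by the triangle inequality their union contains no path joining its ends. Hence the kept pairs
are the edges of a forest, and there are fewer of them than points.
-/

open Finset SimpleGraph

section Lacunary

variable {ι R : Type*} [CommRing R] [LinearOrder R] {f : ι → R} {s t : Finset ι}

/-- The family `f` is lacunary with ratio `2` on `s`: its values there are positive and at least
double from each one to the next. Comparing distinct indices, rather than distinct values, makes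
`f` injective on `s`. -/
structure IsLacunary (f : ι → R) (s : Finset ι) : Prop where
  pos : ∀ i ∈ s, 0 < f i
  two_mul_le : ∀ i ∈ s, ∀ j ∈ s, i ≠ j → f i ≤ f j → 2 * f i ≤ f j

namespace IsLacunary

theorem empty (f : ι → R) : IsLacunary f ∅ := ⟨by simp, by simp⟩

theorem mono (h : IsLacunary f t) (hst : s ⊆ t) : IsLacunary f s :=
  ⟨fun i hi => h.pos i (hst hi), fun i hi j hj => h.two_mul_le i (hst hi) j (hst hj)⟩

variable [IsStrictOrderedRing R] [DecidableEq ι]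

theorem insert_of_two_mul_lt (h : IsLacunary f s) {a : ι} (ha : 0 < f a)
    (hlt : ∀ i ∈ s, 2 * f i < f a) : IsLacunary f (insert a s) where
  pos := forall_mem_insert .. |>.2 ⟨ha, h.pos⟩
  two_mul_le i hi j hj hne hle := by
    rcases mem_insert.1 hi with rfl | his <;> rcases mem_insert.1 hj with rfl | hjs
    · exact absurd rfl hne
    · linarith [hlt j hjs]
    · exact (hlt i his).le
    · exact h.two_mul_le i his j hjs hne hle

theorem sum_lt_of_forall_le {a : ι} (h : IsLacunary f (insert a s)) (ha : a ∉ s)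
    (hle : ∀ i ∈ s, f i ≤ f a) : ∑ i ∈ s, f i < f a := by
  induction s using Finset.induction_on_max_value f generalizing a with
  | empty => simpa using h.pos a (mem_insert_self a ∅)
  | insert b s hb hmax ih =>
    have hsum : ∑ i ∈ s, f i < f b := ih (h.mono (subset_insert a _)) hb hmax
    have hdouble : 2 * f b ≤ f a :=
      h.two_mul_le b (mem_insert_of_mem (mem_insert_self b s)) a (mem_insert_self a _)
        (fun hba => ha (hba ▸ mem_insert_self b s)) (hle b (mem_insert_self b s))
    rw [sum_insert hb]
    linarith

end IsLacunary

theorem exists_subset_isLacunary_forall_le_two_mul [IsStrictOrderedRing R]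
    (hf : ∀ i ∈ s, 0 < f i) :
    ∃ t ⊆ s, IsLacunary f t ∧ ∀ i ∈ s, ∃ j ∈ t, f j ≤ f i ∧ f i ≤ 2 * f j := by
  classical
  induction s using Finset.induction_on_max_value f with
  | empty => exact ⟨∅, Subset.rfl, .empty f, by simp⟩
  | insert a s _ hmax ih =>
    have ha : 0 < f a := hf a (mem_insert_self a s)
    obtain ⟨t, hts, ht, hcover⟩ := ih fun i hi => hf i (mem_insert_of_mem hi)
    by_cases hcovered : ∃ j ∈ t, f a ≤ 2 * f j
    · obtain ⟨j, hj, haj⟩ := hcovered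
      exact ⟨t, hts.trans (subset_insert a s), ht,
        forall_mem_insert .. |>.2 ⟨⟨j, hj, hmax j (hts hj), haj⟩, hcover⟩⟩
    · push Not at hcovered
      refine ⟨insert a t, insert_subset_insert a hts, ht.insert_of_two_mul_lt ha hcovered,
        forall_mem_insert .. |>.2 ⟨⟨a, mem_insert_self a t, le_rfl, by linarith⟩, ?_⟩⟩
      intro i hi
      obtain ⟨j, hj, hji⟩ := hcover i hi
      exact ⟨j, mem_insert_of_mem hj, hji⟩

end Lacunary

section Forest

theorem ncard_edgeSet_lt_card_of_isAcyclic {V : Type*} [Finite V] [Nonempty V]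
    {G : SimpleGraph V} (hG : G.IsAcyclic) : G.edgeSet.ncard < Nat.card V := by
  obtain ⟨T, hGT, -, hT⟩ := connected_top.exists_isTree_le_of_le_of_isAcyclic le_top hG
  have hcard : T.edgeSet.ncard + 1 = Nat.card V := (isTree_iff_connected_and_card.1 hT).2
  have hle : G.edgeSet.ncard ≤ T.edgeSet.ncard := Set.ncard_le_ncard (edgeSet_mono hGT)
  lia

variable {V : Type*} [PseudoMetricSpace V] {G : SimpleGraph V} {E : Finset (Sym2 V)} {u v : V}

/-- The distance between the two points of an unordered pair, i.e. the length of an edge. -/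
noncomputable def pairDist : Sym2 V → ℝ := Sym2.lift ⟨dist, dist_comm⟩

@[simp]
theorem pairDist_mk (u v : V) : pairDist s(u, v) = dist u v := rfl

theorem pairDist_nonneg (e : Sym2 V) : 0 ≤ pairDist e := by
  induction e with | _ u v => exact dist_nonneg

theorem dist_le_sum_pairDist_edges (p : G.Walk u v) : dist u v ≤ (p.edges.map pairDist).sum := by
  induction p with
  | nil => simp
  | cons _ p ih =>
    simp only [Walk.edges_cons, List.map_cons, List.sum_cons, pairDist_mk]
    exact (dist_triangle ..).trans (by gcongr)

theorem dist_le_sum_pairDist_of_reachable (hE : G.edgeSet ⊆ E) (huv : G.Reachable u v) :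
    dist u v ≤ ∑ e ∈ E, pairDist e := by
  classical
  obtain ⟨p, hp⟩ := huv.exists_isPath
  have hpE : p.edges.toFinset ⊆ E := fun e he =>
    hE (p.edges_subset_edgeSet (List.mem_toFinset.1 he))
  calc dist u v ≤ (p.edges.map pairDist).sum := dist_le_sum_pairDist_edges p
    _ = ∑ e ∈ p.edges.toFinset, pairDist e := (List.sum_toFinset _ hp.isTrail.edges_nodup).symm
    _ ≤ ∑ e ∈ E, pairDist e := sum_le_sum_of_subset_of_nonneg hpE fun e _ _ => pairDist_nonneg e

theorem IsLacunary.isAcyclic_fromEdgeSet (hE : IsLacunary pairDist E) :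
    (fromEdgeSet (E : Set (Sym2 V))).IsAcyclic := by
  classical
  induction E using Finset.induction_on_max_value (pairDist (V := V)) with
  | empty => simp
  | insert e E he hmax ih =>
    induction e with | _ u v =>
    have hunreachable : ¬ (fromEdgeSet (E : Set (Sym2 V))).Reachable u v := fun huv =>
      (dist_le_sum_pairDist_of_reachable (by simp) huv).not_gt (hE.sum_lt_of_forall_le he hmax)
    have hsup : fromEdgeSet (insert s(u, v) E : Finset (Sym2 V)) =
        fromEdgeSet (E : Set (Sym2 V)) ⊔ edge u v := by
      rw [edge, coe_insert, Set.insert_eq, Set.union_comm, fromEdgeSet_union]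
    rw [hsup]
    exact (ih (hE.mono (subset_insert _ E))).sup_edge_of_not_reachable hunreachable

theorem IsLacunary.edgeSet_fromEdgeSet (hE : IsLacunary pairDist E) :
    (fromEdgeSet (E : Set (Sym2 V))).edgeSet = E := by
  rw [SimpleGraph.edgeSet_fromEdgeSet, sdiff_eq_left, Set.disjoint_left]
  intro e he hdiag
  induction e with | _ u v =>
  obtain rfl : u = v := hdiag
  simpa using hE.pos _ he

theorem IsLacunary.card_le_natCard [Finite V] (hE : IsLacunary pairDist E) :
    #E ≤ Nat.card V := by
  cases isEmpty_or_nonempty V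
  · simp [Subsingleton.elim E ∅]
  · have hlt := ncard_edgeSet_lt_card_of_isAcyclic hE.isAcyclic_fromEdgeSet
    rw [hE.edgeSet_fromEdgeSet, Set.ncard_coe_finset] at hlt
    exact hlt.le

end Forest

theorem distance_selection_wspd_general {X : Type*} [PseudoMetricSpace X] (P : Finset X) :
    ∃ Z : Finset ℝ, #Z ≤ 2 * #P ∧ (∀ x ∈ Z, 0 ≤ x) ∧
      ∀ p ∈ P, ∀ q ∈ P, 0 < dist p q →
        ∃ x ∈ Z, ∃ x' ∈ Z, x ≤ dist p q ∧ dist p q ≤ x' ∧ x' ≤ 2 * x := by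
  classical
  obtain ⟨E, -, hE, hcover⟩ := exists_subset_isLacunary_forall_le_two_mul
    (s := {e : Sym2 P | 0 < pairDist e}) (f := pairDist) (by simp)
  have hcard : #E ≤ #P := by simpa using hE.card_le_natCard
  refine ⟨E.image pairDist ∪ E.image (2 * pairDist ·), ?_, ?_, ?_⟩
  · calc #(E.image pairDist ∪ E.image (2 * pairDist ·))
        ≤ #(E.image pairDist) + #(E.image (2 * pairDist ·)) := card_union_le ..
      _ ≤ #E + #E := add_le_add card_image_le card_image_le
      _ ≤ 2 * #P := by lia
  · simp only [mem_union, mem_image]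
    rintro _ (⟨e, -, rfl⟩ | ⟨e, -, rfl⟩)
    · exact pairDist_nonneg e
    · exact mul_nonneg zero_le_two (pairDist_nonneg e)
  · intro p hp q hq hpq
    obtain ⟨e, he, hle, hge⟩ := hcover s(⟨p, hp⟩, ⟨q, hq⟩) (mem_filter.2 ⟨mem_univ _, hpq⟩)
    exact ⟨pairDist e, mem_union_left _ (mem_image_of_mem _ he),
      2 * pairDist e, mem_union_right _ (mem_image_of_mem _ he), hle, hge, le_rfl⟩

/-- There is a constant `C` depending only on `d` such that: for every
finite set `P` of points in `ℝ^d` there is a set `Z` of at most `C·|P|` nonnegative reals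
such that every pairwise distance of `P` is sandwiched as `x ≤ ‖p − q‖ ≤ x' ≤ 2x` for some
`x, x' ∈ Z`. -/
theorem distance_selection_wspd (d : ℕ) :
    ∃ C : ℝ, 0 < C ∧ ∀ (P : Finset (Pt d)),
      ∃ Z : Finset ℝ, (Z.card : ℝ) ≤ C * P.card ∧ (∀ x ∈ Z, 0 ≤ x) ∧
        ∀ p ∈ P, ∀ q ∈ P, p ≠ q →
          ∃ x ∈ Z, ∃ x' ∈ Z, x ≤ dist p q ∧ dist p q ≤ x' ∧ x' ≤ 2 * x := by
  refine ⟨2, two_pos, fun P => ?_⟩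
  obtain ⟨Z, hcard, hnonneg, hZ⟩ := distance_selection_wspd_general P
  exact ⟨Z, mod_cast hcard, hnonneg, fun p hp q hq hpq => hZ p hp q hq (dist_pos.2 hpq)⟩
end

section
/- Let P = p_1 … p_n be a polygonal curve in ℝ^d and let 0 < x < x' be real numbers such that no pairwise distance of P lies in the interval (x, x'], i.e. L(P) ∩ (x, x'] = ∅. Then for all μ, μ' ∈ (x, x'], the greedy simplifications simpl(P,μ) and simpl(P,μ') have the same sequence of vertices. -/
open scoped BigOperators

theorem le_iff_lt_of_notMem_Ioc {α : Type*} [LinearOrder α] {a b c r : α}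
    (hc : c ∈ Set.Ioc a b) (hr : r ∉ Set.Ioc a b) : c ≤ r ↔ b < r :=
  ⟨fun hcr => lt_of_not_ge fun hrb => hr ⟨hc.1.trans_le hcr, hrb⟩, hc.2.trans ∘ le_of_lt⟩

theorem le_iff_le_of_notMem_Ioc {α : Type*} [LinearOrder α] {a b c c' r : α}
    (hc : c ∈ Set.Ioc a b) (hc' : c' ∈ Set.Ioc a b) (hr : r ∉ Set.Ioc a b) :
    c ≤ r ↔ c' ≤ r :=
  (le_iff_lt_of_notMem_Ioc hc hr).trans (le_iff_lt_of_notMem_Ioc hc' hr).symm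

theorem pairwise_iff_getD {α : Type*} {R : α → α → Prop} {l : List α} (a : α) :
    l.Pairwise R ↔ ∀ i j, i < j → j < l.length → R (l.getD i a) (l.getD j a) := by
  rw [List.pairwise_iff_getElem]
  refine ⟨fun h i j hij hj => ?_, fun h i j hi hj hij => ?_⟩
  · simpa only [List.getD_eq_getElem, hij.trans hj, hj] using h i j (hij.trans hj) hj hij
  · simpa only [List.getD_eq_getElem, hi, hj] using h i j hij hj

section Simplification

variable {d : ℕ} {μ μ' : ℝ}

theorem greedyScan_congr {cur : Pt d} {l : List (Pt d)}
    (h : (cur :: l).Pairwise fun p q => μ ≤ dist p q ↔ μ' ≤ dist p q) :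
    greedyScan μ cur l = greedyScan μ' cur l := by
  induction l generalizing cur with
  | nil => rfl
  | cons p l ih =>
    have marked_iff : μ ≤ dist cur p ↔ μ' ≤ dist cur p := 
      List.rel_of_pairwise_cons h List.mem_cons_self
    have from_p : greedyScan μ p l = greedyScan μ' p l := ih h.tail
    have from_cur : greedyScan μ cur l = greedyScan μ' cur l :=
      ih (h.sublist ((List.sublist_cons_self p l).cons_cons cur))
    simp only [greedyScan, marked_iff, from_p, from_cur]

theorem simplList_congr {l : List (Pt d)}
    (h : l.Pairwise fun p q => μ ≤ dist p q ↔ μ' ≤ dist p q) :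
    simplList μ l = simplList μ' l := by
  cases l with
  | nil => rfl
  | cons p l => simp only [simplList, greedyScan_congr h]

end Simplification

/-- Let `P = p_1 … p_n` be a polygonal curve (vertex list `l`) and
`0 < x < x'` with no pairwise distance of `P` in `(x, x']`. Then for all `μ, μ' ∈ (x, x']`
the greedy simplifications `simpl(P,μ)` and `simpl(P,μ')` have the same vertex sequence. -/
theorem simpl_stable {d : ℕ} (l : List (Pt d)) (hl : l ≠ [])
    (x x' : ℝ) (hx : 0 < x) (hxx' : x < x')
    (hgap : ∀ i j, i < j → j < l.length →
      dist (l.getD i 0) (l.getD j 0) ∉ Set.Ioc x x')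
    (μ μ' : ℝ) (hμ : μ ∈ Set.Ioc x x') (hμ' : μ' ∈ Set.Ioc x x') :
    simplList μ l = simplList μ' l := by
  have gap : l.Pairwise fun p q => dist p q ∉ Set.Ioc x x' := (pairwise_iff_getD 0).2 hgap
  exact simplList_congr (gap.imp (le_iff_le_of_notMem_Ioc hμ hμ'))
end
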